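/- Let S = ⟨n₁,n₂,n₃,n₄⟩ be an almost symmetric numerical semigroup. Then the type of S is at most 4. -/

import Mathlib

/-- The numerical semigroup generated by `n`, viewed inside `ℤ`. -/
def NS {e : ℕ} (n : Fin e → ℕ) : Set ℤ :=
  {x | ∃ a : Fin e → ℕ, x = ∑ j, (a j : ℤ) * n j}

/-- Pseudo-Frobenius numbers of the numerical semigroup generated by `n`. -/
def PF {e : ℕ} (n : Fin e → ℕ) : Set ℤ :=
  {x | x ∉ NS n ∧ ∀ i, x + (n i : ℤ) ∈ NS n}

/-- `F` is the Frobenius number: the maximum of `ℤ \ S`. -/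
def IsFrob {e : ℕ} (n : Fin e → ℕ) (F : ℤ) : Prop :=
  F ∉ NS n ∧ ∀ x : ℤ, F < x → x ∈ NS n

/-- Almost symmetry with respect to the Frobenius number `F`. -/
def AlmostSym {e : ℕ} (n : Fin e → ℕ) (F : ℤ) : Prop :=
  ∀ x : ℤ, x ∉ NS n → F - x ∉ NS n → (x ∈ PF n ∧ F - x ∈ PF n)

/-- `A` is an RF-matrix for `f`. -/
def IsRF {e : ℕ} (n : Fin e → ℕ) (f : ℤ) (A : Matrix (Fin e) (Fin e) ℤ) : Prop :=
  (∀ i, A i i = -1) ∧ (∀ i j, i ≠ j → 0 ≤ A i j) ∧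
    (∀ i, ∑ j, A i j * (n j : ℤ) = f)

/-- `K = λ_{ij} = max {K ∈ ℕ : K·n_j - n_i ∉ S}`. -/
def IsLam {e : ℕ} (n : Fin e → ℕ) (i j : Fin e) (K : ℕ) : Prop :=
  ((K : ℤ) * n j - n i ∉ NS n) ∧
    ∀ L : ℕ, ((L : ℤ) * n j - n i ∉ NS n) → L ≤ K

/-- `n` is a minimal generating system. -/
def MinGen {e : ℕ} (n : Fin e → ℕ) : Prop :=
  ∀ i, ¬ ∃ a : Fin e → ℕ, a i = 0 ∧ (n i : ℤ) = ∑ j, (a j : ℤ) * n j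

/-- Abstract counting lemma. `E f i k` is `f + n i - n k` lies in the semigroup,
`C f i k` is `f + n i - n k` lies in `P`. -/
theorem count_aux (P : Finset ℤ) (m : Fin 4 → ℤ) (F : ℤ) (S : Set ℤ)
    (hinv : ∀ f ∈ P, F - f ∈ P)
    (hex : ∀ f ∈ P, ∀ i, ∃ k, f + m i - m k ∈ S)
    (hE : ∀ f ∈ P, ∀ i k, f + m i - m k ∈ S → F - f + m k - m i ∉ S)
    (hPS : ∀ f ∈ P, f ∉ S)
    (hU : ∀ f ∈ P, ∀ g ∈ P, ∀ i k j, (∀ l, f + m i - m l ∈ S ↔ l = j) →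
      (∀ l, g + m k - m l ∈ S ↔ l = j) → f + m i = g + m k) :
    P.card ≤ 2 := by
  classical
  set X : Finset (ℤ × Fin 4) := P ×ˢ Finset.univ with hX
  set e : ℤ → Fin 4 → Fin 4 → ℤ := fun f i k => if f + m i - m k ∈ S then 1 else 0 with he
  set c : ℤ → Fin 4 → Fin 4 → ℤ := fun f i k => if f + m i - m k ∈ P then 1 else 0 with hc
  set Q : Fin 4 → ℤ × Fin 4 → Prop := fun j x => ∀ k, x.1 + m x.2 - m k ∈ S ↔ k = j with hQ
  set U : Fin 4 → Finset (ℤ × Fin 4) := fun j => X.filter (Q j) with hUdef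
  set u : Fin 4 → ℤ × Fin 4 → ℤ := fun j x => if Q j x then 1 else 0 with hu
  have hXc : (X.card : ℤ) = 4 * P.card := by simp [hX, Finset.card_product, mul_comm]
  have hUc : ∀ j, ((U j).card : ℤ) = ∑ x ∈ X, u j x := by
    intro j; simp only [hUdef, hu]; rw [Finset.sum_boole]
  have huone : ∀ j x, Q j x → ∀ j', u j' x = if j' = j then 1 else 0 := by
    intro j x hq j'
    simp only [hu]
    by_cases h : j' = j
    · subst h; simp [hq]
    · rw [if_neg h, if_neg]
      intro hq'
      exact h (((hq j').1 ((hq' j').2 rfl)))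
  have h1 : ∀ f ∈ P, ∀ i k, e f i k + e (F - f) k i + c f i k ≤ 1 := by
    intro f hf i k
    simp only [he, hc]
    by_cases a : f + m i - m k ∈ S
    · have b := hE f hf i k a
      have d : f + m i - m k ∉ P := fun h => hPS _ h a
      simp [a, b, d]
    · by_cases d : f + m i - m k ∈ P
      · have b := hPS _ (hinv _ d)
        have e1 : F - (f + m i - m k) = F - f + m k - m i := by ring
        rw [e1] at b
        simp [a, b, d]
      · simp only [a, d, if_false]; split_ifs <;> simp
  have h2 : ∑ f ∈ P, ∑ i, ∑ k, e (F - f) k i = ∑ f ∈ P, ∑ i, ∑ k, e f i k := by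
    refine Finset.sum_nbij' (fun f => F - f) (fun f => F - f) hinv hinv (by simp) (by simp) ?_
    intro f _
    exact Finset.sum_comm
  have h3 : ∑ f ∈ P, ∑ i : Fin 4, ∑ k : Fin 4, (e f i k + e (F - f) k i + c f i k)
      ≤ ∑ f ∈ P, ∑ i : Fin 4, ∑ k : Fin 4, 1 :=
    Finset.sum_le_sum fun f hf => Finset.sum_le_sum fun i _ =>
      Finset.sum_le_sum fun k _ => h1 f hf i k
  simp only [Finset.sum_add_distrib] at h3
  rw [h2] at h3
  have h3' : ∑ f ∈ P, ∑ i : Fin 4, ∑ k : Fin 4, (1 : ℤ) = 16 * P.card := by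
    simp; ring
  rw [h3'] at h3
  have hEX : ∑ f ∈ P, ∑ i, ∑ k, e f i k = ∑ x ∈ X, ∑ k, e x.1 x.2 k := by
    rw [hX, Finset.sum_product]
  have hCX : ∑ f ∈ P, ∑ i, ∑ k, c f i k = ∑ x ∈ X, ∑ k, c x.1 x.2 k := by
    rw [hX, Finset.sum_product]
  rw [hEX, hCX] at h3
  have hD : ∀ x ∈ X, 2 ≤ ∑ k, e x.1 x.2 k + ∑ j, u j x := by
    intro x hx
    have hxP : x.1 ∈ P := (Finset.mem_product.1 hx).1
    have hsum : ∑ k, e x.1 x.2 k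
        = ((Finset.univ.filter fun k => x.1 + m x.2 - m k ∈ S).card : ℤ) := by
      simp [he]
    obtain ⟨k0, hk0⟩ := hex x.1 hxP x.2
    by_cases h : ∃ j, Q j x
    · obtain ⟨j, hj⟩ := h
      have : ∑ j', u j' x = 1 := by simp [huone j x hj]
      rw [this, hsum]
      have : 0 < (Finset.univ.filter fun k => x.1 + m x.2 - m k ∈ S).card :=
        Finset.card_pos.2 ⟨k0, by simpa using hk0⟩
      omega
    · have h0 : 0 ≤ ∑ j', u j' x := by
        apply Finset.sum_nonneg; intro j _; simp only [hu]; split_ifs <;> simp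
      have : 1 < (Finset.univ.filter fun k => x.1 + m x.2 - m k ∈ S).card := by
        rw [Finset.one_lt_card]
        by_contra hcon
        push Not at hcon
        apply h
        refine ⟨k0, fun k => ⟨fun hk => ?_, fun hk => hk ▸ hk0⟩⟩
        exact hcon k (by simpa using hk) k0 (by simpa using hk0)
      rw [hsum]; omega
  have hR : ∀ x ∈ X, ∑ j, u j x * ((U j).card : ℤ) + 1 - ∑ j, u j x ≤ ∑ k, c x.1 x.2 k := by
    intro x hx
    have hxP : x.1 ∈ P := (Finset.mem_product.1 hx).1
    have hsum : ∑ k, c x.1 x.2 k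
        = ((Finset.univ.filter fun k => x.1 + m x.2 - m k ∈ P).card : ℤ) := by
      simp [hc]
    rw [hsum]
    by_cases h : ∃ j, Q j x
    · obtain ⟨j, hj⟩ := h
      have a1 : ∑ j', u j' x = 1 := by simp [huone j x hj]
      have a2 : ∑ j', u j' x * ((U j').card : ℤ) = (U j).card := by simp [huone j x hj]
      have hyx : ∀ y ∈ U j, x.1 + m x.2 = y.1 + m y.2 := by
        intro y hy
        obtain ⟨hyX, hyQ⟩ := Finset.mem_filter.1 hy
        exact hU _ hxP _ (Finset.mem_product.1 hyX).1 _ _ j hj hyQ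
      have a3 : (U j).card ≤ (Finset.univ.filter fun k => x.1 + m x.2 - m k ∈ P).card := by
        apply Finset.card_le_card_of_injOn (fun y => y.2)
        · intro y hy
          have hy' : y ∈ U j := hy
          have := hyx y hy'
          have hyP : y.1 ∈ P := (Finset.mem_product.1 (Finset.mem_filter.1 hy').1).1
          have e2 : x.1 + m x.2 - m y.2 = y.1 := by rw [this]; ring
          simp [e2, hyP]
        · intro y hy z hz hyz
          have b1 := hyx y hy
          have b2 := hyx z hz
          have hyz' : y.2 = z.2 := hyz
          rw [hyz'] at b1
          exact Prod.ext (by linarith) hyz'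
      rw [a1, a2]; omega
    · have hz : ∀ j, u j x = 0 := by
        intro j; simp only [hu]; rw [if_neg]; intro hq; exact h ⟨j, hq⟩
      have : 0 < (Finset.univ.filter fun k => x.1 + m x.2 - m k ∈ P).card :=
        Finset.card_pos.2 ⟨x.2, by simpa using hxP⟩
      simp only [hz, zero_mul, Finset.sum_const_zero]
      omega
  have hD' := Finset.sum_le_sum hD
  have hR' := Finset.sum_le_sum hR
  simp only [Finset.sum_add_distrib, Finset.sum_sub_distrib, Finset.sum_const, nsmul_eq_mul,
    hXc] at hD' hR'
  have hs1 : ∑ x ∈ X, ∑ j, u j x = ∑ j, ((U j).card : ℤ) := by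
    rw [Finset.sum_comm]; exact Finset.sum_congr rfl fun j _ => (hUc j).symm
  have hs2 : ∑ x ∈ X, ∑ j, u j x * ((U j).card : ℤ) = ∑ j, ((U j).card : ℤ) * (U j).card := by
    rw [Finset.sum_comm]
    refine Finset.sum_congr rfl fun j _ => ?_
    rw [← Finset.sum_mul, ← hUc j]
  rw [hs1] at hD' hR'
  rw [hs2] at hR'
  have hq : ∀ z : ℤ, 3 * z - z * z ≤ 2 := by
    intro z
    rcases le_or_gt z 1 with h | h
    · nlinarith
    · have : 2 ≤ z := h
      nlinarith
  simp only [Fin.sum_univ_four (fun j => ((U j).card : ℤ)),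
    Fin.sum_univ_four (fun j => ((U j).card : ℤ) * (U j).card)] at hD' hR'
  have q0 := hq (U 0).card
  have q1 := hq (U 1).card
  have q2 := hq (U 2).card
  have q3 := hq (U 3).card
  have : (P.card : ℤ) ≤ 2 := by linarith
  exact_mod_cast this

theorem NS_add {n : Fin 4 → ℕ} {x y : ℤ} (hx : x ∈ NS n) (hy : y ∈ NS n) : x + y ∈ NS n := by
  obtain ⟨a, rfl⟩ := hx
  obtain ⟨b, rfl⟩ := hy
  exact ⟨fun j => a j + b j, by simp [add_mul, Finset.sum_add_distrib]⟩

theorem NS_mul {n : Fin 4 → ℕ} (a : ℕ) (j : Fin 4) : (a : ℤ) * n j ∈ NS n :=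
  ⟨fun k => if k = j then a else 0, by simp⟩

theorem NS_sub {n : Fin 4 → ℕ} (a : Fin 4 → ℕ) (j : Fin 4) (h : a j ≠ 0) :
    (∑ k, (a k : ℤ) * n k) - n j ∈ NS n := by
  refine ⟨fun k => a k - if k = j then 1 else 0, ?_⟩
  have : ∀ k, ((a k - (if k = j then 1 else 0) : ℕ) : ℤ) * n k
      = (a k : ℤ) * n k - if k = j then (n k : ℤ) else 0 := by
    intro k
    split_ifs with hk
    · subst hk
      rw [Nat.cast_sub (by omega)]; push_cast; ring
    · simp
  simp only [this, Finset.sum_sub_distrib]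
  simp

theorem NS_dec {n : Fin 4 → ℕ} {x : ℤ} (hx : x ∈ NS n) (h0 : x ≠ 0) :
    ∃ k, x - n k ∈ NS n := by
  obtain ⟨a, rfl⟩ := hx
  by_contra hcon
  push Not at hcon
  apply h0
  apply Finset.sum_eq_zero
  intro k _
  by_cases h : a k = 0
  · simp [h]
  · exact absurd (NS_sub a k h) (hcon k)

theorem NS_uniq {n : Fin 4 → ℕ} {x : ℤ} (hx : x ∈ NS n) (j : Fin 4)
    (h : ∀ l, x - n l ∈ NS n → l = j) : ∃ a : ℕ, x = a * n j := by
  obtain ⟨a, rfl⟩ := hx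
  refine ⟨a j, ?_⟩
  apply Finset.sum_eq_single j
  · intro k _ hk
    by_cases h' : a k = 0
    · simp [h']
    · exact absurd (h k (NS_sub a k h')) hk
  · simp

theorem uniq_le {n : Fin 4 → ℕ} {f g : ℤ} (hf : f ∈ PF n) (hg : g ∈ PF n) {i k j : Fin 4}
    (h1 : ∀ l, f + n i - n l ∈ NS n ↔ l = j) (h2 : ∀ l, g + n k - n l ∈ NS n ↔ l = j)
    {a b : ℕ} (ha : f + n i = a * n j) (hb : g + n k = b * n j) : b ≤ a := by
  by_contra hab
  push Not at hab
  obtain ⟨d, rfl⟩ := Nat.exists_eq_add_of_lt hab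
  have hij : i ≠ j := by
    rintro rfl
    have := (h1 i).2 rfl
    rw [add_sub_cancel_right] at this
    exact hf.1 this
  apply hij
  apply (h2 i).1
  have e : g + (n k : ℤ) - n i = (f + n j) + (d : ℤ) * n j := by
    push_cast at hb
    linear_combination hb - ha
  rw [e]
  exact NS_add (hf.2 j) (NS_mul d j)

theorem stmt11 (n : Fin 4 → ℕ)
    (hpos : ∀ i, 0 < n i)
    (hgcd : Finset.univ.gcd n = 1)
    (hmin : MinGen n)
    (F : ℤ) (hF : IsFrob n F) (hAS : AlmostSym n F) :
    (PF n).ncard ≤ 4 := by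
  classical
  by_cases hfin : (PF n).Finite
  swap
  · rw [Set.Infinite.ncard hfin]; omega
  have hP : ∀ f, f ∈ hfin.toFinset.erase F ↔ f ≠ F ∧ f ∈ PF n := by
    intro f; simp
  have hcard : (hfin.toFinset.erase F).card ≤ 2 := by
    have hinv : ∀ f ∈ hfin.toFinset.erase F, F - f ∈ hfin.toFinset.erase F := by
      intro f hf
      rw [hP] at hf ⊢
      obtain ⟨hne, hf⟩ := hf
      constructor
      · intro h
        apply hf.1
        have : f = 0 := by linarith
        rw [this]
        exact ⟨fun _ => 0, by simp⟩
      · refine (hAS f hf.1 ?_).2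
        intro h
        obtain ⟨k, hk⟩ := NS_dec h (sub_ne_zero.2 (Ne.symm hne))
        apply hF.1
        have := NS_add (hf.2 k) hk
        have e : f + (n k : ℤ) + (F - f - n k) = F := by ring
        rwa [e] at this
    apply count_aux _ (fun i => (n i : ℤ)) F (NS n) hinv
    · intro f hf i
      have hf' := (hP _).1 (hinv f hf)
      rw [hP] at hf
      apply NS_dec (hf.2.2 i)
      intro h0
      apply hf'.2.1
      apply hF.2
      have := hpos i
      have : (0 : ℤ) < n i := by exact_mod_cast this
      linarith
    · intro f hf i k h1 h2
      apply hF.1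
      have := NS_add h1 h2
      have e : f + (n i : ℤ) - n k + (F - f + n k - n i) = F := by ring
      rwa [e] at this
    · intro f hf
      exact ((hP f).1 hf).2.1
    · intro f hf g hg i k j h1 h2
      have hf := ((hP f).1 hf).2
      have hg := ((hP g).1 hg).2
      obtain ⟨a, ha⟩ := NS_uniq (hf.2 i) j (fun l => (h1 l).1)
      obtain ⟨b, hb⟩ := NS_uniq (hg.2 k) j (fun l => (h2 l).1)
      have hab : a = b := le_antisymm (uniq_le hg hf h2 h1 hb ha) (uniq_le hf hg h1 h2 ha hb)
      show f + (n i : ℤ) = g + n k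
      rw [ha, hb, hab]
  rw [Set.ncard_eq_toFinset_card _ hfin]
  have := Finset.pred_card_le_card_erase (s := hfin.toFinset) (a := F)
  omega
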